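/- Fix ε₀ ∈ (0,1]. There exist constants ε > 0 and C > 0, depending only on n, P, c, c₀ and ε₀, such that for every t ∈ [ε₀,1] and every solution φ of the continuity-method equation at parameter t, with x^t the unique minimum point of w_t := tφ + (1−t)φ⁰, one has w_t(x) ≥ ε|x − x^t| − C for all x ∈ ℝⁿ. -/

import Mathlib

open MeasureTheory

noncomputable section

/-- Dot product on `Fin n → ℝ`. -/
def dotp {n : ℕ} (x y : Fin n → ℝ) : ℝ := ∑ j, x j * y j

/-- The affine functions `lᵢ(y) = ⟨y, n⁽ⁱ⁾⟩ + 1`. -/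
def lfun {n d : ℕ} (N : Fin d → Fin n → ℤ) (i : Fin d) (y : Fin n → ℝ) : ℝ :=
  (∑ j, y j * (N i j : ℝ)) + 1

/-- The dual polytope `P = {y : ⟨y, n⁽ⁱ⁾⟩ ≥ -1 for all i}`. -/
def Pset {n d : ℕ} (N : Fin d → Fin n → ℤ) : Set (Fin n → ℝ) :=
  {y | ∀ i, (∑ j, y j * (N i j : ℝ)) ≥ -1}

/-- The function `u⁰(y) = ∑ᵢ lᵢ(y) log lᵢ(y)`. -/
def u0 {n d : ℕ} (N : Fin d → Fin n → ℤ) (y : Fin n → ℝ) : ℝ :=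
  ∑ i, lfun N i y * Real.log (lfun N i y)

/-- The Legendre transform `φ⁰(x) = sup_{y ∈ P°} (⟨x,y⟩ - u⁰(y))`. -/
def phi0 {n d : ℕ} (N : Fin d → Fin n → ℤ) (x : Fin n → ℝ) : ℝ :=
  sSup ((fun y => dotp x y - u0 N y) '' interior (Pset N))

/-- The gradient of a function on `Fin n → ℝ`. -/
def grad {n : ℕ} (f : (Fin n → ℝ) → ℝ) (x : Fin n → ℝ) : Fin n → ℝ :=
  fun p => fderiv ℝ f x (Pi.single p 1)

/-- Second partial derivatives (Hessian matrix) of a function on `Fin n → ℝ`. -/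
def hess {n : ℕ} (f : (Fin n → ℝ) → ℝ) (x : Fin n → ℝ) : Matrix (Fin n) (Fin n) ℝ :=
  Matrix.of fun p q => fderiv ℝ (fun z => fderiv ℝ f z (Pi.single q 1)) x (Pi.single p 1)

/-- The Euclidean norm of `x ∈ ℝⁿ`. -/
def eucNorm {n : ℕ} (x : Fin n → ℝ) : ℝ := Real.sqrt (∑ j, x j ^ 2)

/-- The function `w_t = tφ + (1-t)φ⁰`. -/
def wfun {n d : ℕ} (N : Fin d → Fin n → ℤ) (t : ℝ) (φ : (Fin n → ℝ) → ℝ)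
    (x : Fin n → ℝ) : ℝ :=
  t * φ x + (1 - t) * phi0 N x

/-- A solution of the continuity-method equation at parameter `t`: a smooth strictly
convex `φ : ℝⁿ → ℝ` whose gradient map is a diffeomorphism from `ℝⁿ` onto `P°`,
satisfying `det D²φ = exp(-c₀ - w_t - ⟨c, Dφ⟩)` with `w_t = tφ + (1-t)φ⁰`. -/
def IsSolution {n d : ℕ} (N : Fin d → Fin n → ℤ) (c : Fin n → ℝ) (c₀ t : ℝ)
    (φ : (Fin n → ℝ) → ℝ) : Prop :=
  ContDiff ℝ (⊤ : ℕ∞) φ ∧ StrictConvexOn ℝ Set.univ φ ∧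
  Set.BijOn (grad φ) Set.univ (interior (Pset N)) ∧
  ContDiffOn ℝ (⊤ : ℕ∞) (Function.invFun (grad φ)) (interior (Pset N)) ∧
  ∀ x, (hess φ x).det = Real.exp (-c₀ - wfun N t φ x - dotp c (grad φ x))

/-!
A convex function whose sublevel set `{w ≤ min w + 1}` has radius at most `r` about its minimum
point `x₀` satisfies `|x - x₀| ≤ r (1 + w x - w x₀)`, so it suffices to bound, uniformly, this
sublevel set and `min w` from below.

Since `Dφ` takes values in the bounded set `P°`, changing variables in
`det D²φ = e^(-c₀ - w - ⟨c, Dφ⟩)` pins `∫ e^(-w)` between two positive constants, and `w` is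
Lipschitz with a uniform constant, so the sublevel set contains a ball of fixed radius about `x₀`.
The ball and the upper bound on the mass bound `min w` from below.

Choose `n` vectors `V` in the translated sublevel set with `|det V|` within a factor two of its
supremum. By Cramer's rule the sublevel set lies in the parallelepiped spanned by `±2V`, so linear
growth in the coordinates of `V` gives `∫ e^(-w) ≲ e^(-min w) |det V|`. In the same coordinates the
sublevel set contains a fixed cube on which `w` oscillates by at most one, so comparison with a
paraboloid yields a point with `(det V)² det D²(tφ) ≲ 1`, that is `(det V)² ≲ e^(min w)`. The two
estimates together bound `|det V|`, and Cramer's rule applied to the fixed ball bounds the sublevel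
set.
-/

open Matrix Metric Set Filter
open scoped Topology

/-! ### Convex functions -/

theorem seminorm_sub_le_of_sublevel {E : Type*} [AddCommGroup E] [Module ℝ E] (q : Seminorm ℝ E)
    {w : E → ℝ} (hw : ConvexOn ℝ univ w) {x₀ : E} (hmin : ∀ x, w x₀ ≤ w x) {r : ℝ}
    (hr : ∀ x, w x ≤ w x₀ + 1 → q (x - x₀) ≤ r) (x : E) :
    q (x - x₀) ≤ r * (1 + (w x - w x₀)) := by
  have hr0 : 0 ≤ r := by simpa using hr x₀ (by linarith)
  -- Pull `x` back towards `x₀` by the factor `σ⁻¹`, which lands in the sublevel set.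
  set σ := max 1 (w x - w x₀)
  have hσ1 : 1 ≤ σ := le_max_left _ _
  have hσ : 0 < σ := by linarith
  have hσx : σ ≤ 1 + (w x - w x₀) := max_le (by linarith [hmin x]) (by linarith)
  have hconv : w (x₀ + σ⁻¹ • (x - x₀)) ≤ (1 - σ⁻¹) * w x₀ + σ⁻¹ * w x := by
    have := hw.2 (mem_univ x₀) (mem_univ x) (sub_nonneg.2 (inv_le_one_of_one_le₀ hσ1))
      (inv_nonneg.2 hσ.le) (by ring)
    rwa [show (1 - σ⁻¹) • x₀ + σ⁻¹ • x = x₀ + σ⁻¹ • (x - x₀) by module] at this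
  have hle : σ⁻¹ * (w x - w x₀) ≤ 1 := by
    rw [inv_mul_le_iff₀ hσ, mul_one]; exact le_max_right _ _
  have hq := hr (x₀ + σ⁻¹ • (x - x₀)) (by linarith)
  rw [add_sub_cancel_left, map_smul_eq_mul, norm_inv, Real.norm_of_nonneg hσ.le,
    inv_mul_le_iff₀ hσ] at hq
  calc q (x - x₀) ≤ r * σ := by linarith
    _ ≤ r * (1 + (w x - w x₀)) := by gcongr

theorem exists_continuousLinearMap_add_le {E : Type*} [NormedAddCommGroup E] [NormedSpace ℝ E]
    [FiniteDimensional ℝ E] {g : E → ℝ} (hg : ConvexOn ℝ univ g) {x₀ : E} {s : ℝ}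
    (hs : s < g x₀) : ∃ (ℓ : E →L[ℝ] ℝ) (b : ℝ), (∀ x, ℓ x + b ≤ g x) ∧ ℓ x₀ + b = s := by
  obtain ⟨ℓ, b, hle, heq⟩ := hg.exists_affine_le_of_lt (𝕜 := ℝ) (mem_univ x₀) hs isClosed_univ
    (hg.continuousOn isOpen_univ).lowerSemicontinuousOn
  exact ⟨ℓ, b, fun x => hle ⟨x, mem_univ x⟩, heq⟩

/-! ### Determinants -/

section Determinant

variable {ι : Type*} [Fintype ι]

theorem mulVec_mem_of_convex {κ : Type*} {K : Set (κ → ℝ)} (hK : Convex ℝ K)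
    (h0 : 0 ∈ K) {V : Matrix κ ι ℝ} (hV : ∀ i, V.col i ∈ K) {a : ι → ℝ} (ha : 0 ≤ a)
    (hsum : ∑ i, a i ≤ 1) : V *ᵥ a ∈ K := by
  have hsum_col : V *ᵥ a = ∑ o : Option ι,
      o.elim (1 - ∑ i, a i) a • (o.elim 0 V.col : κ → ℝ) := by
    ext j
    simp [Fintype.sum_option, mulVec, dotProduct, mul_comm]
  rw [hsum_col]
  refine hK.sum_mem ?_ (by simp [Fintype.sum_option]) ?_
  · rintro (_ | i) -
    exacts [sub_nonneg.2 hsum, ha i]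
  · rintro (_ | i) -
    exacts [h0, hV i]

variable [DecidableEq ι]

theorem det_le_pow_of_posSemidef {A : Matrix ι ι ℝ} (hA : A.PosSemidef) {μ : ℝ}
    (hμ : ∀ u, u ⬝ᵥ A *ᵥ u ≤ μ * (u ⬝ᵥ u)) : A.det ≤ μ ^ Fintype.card ι := by
  have heig (i : ι) : hA.1.eigenvalues i ≤ μ := by
    have hunit : (hA.1.eigenvectorBasis i).ofLp ⬝ᵥ (hA.1.eigenvectorBasis i).ofLp = 1 := by
      have := EuclideanSpace.real_norm_sq_eq (hA.1.eigenvectorBasis i)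
      rw [hA.1.eigenvectorBasis.orthonormal.1 i] at this
      simpa [dotProduct, sq] using this.symm
    have := hμ (hA.1.eigenvectorBasis i)
    rw [hunit, mul_one] at this
    simpa [hA.1.eigenvalues_eq] using this
  calc A.det = ∏ i, hA.1.eigenvalues i := hA.1.det_eq_prod_eigenvalues
    _ ≤ ∏ _i : ι, μ := Finset.prod_le_prod (fun i _ => hA.eigenvalues_nonneg i) fun i _ => heig i
    _ = μ ^ Fintype.card ι := by simp

variable {K : Set (ι → ℝ)} {D : ℝ}

-- Cramer's rule: the coordinates of `z` in the basis `V` are quotients of determinants.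
theorem norm_inv_mulVec_le (hD : ∀ W : Matrix ι ι ℝ, (∀ i, W.col i ∈ K) → |W.det| ≤ D)
    {V : Matrix ι ι ℝ} (hV : ∀ i, V.col i ∈ K) (hdet : V.det ≠ 0) {z : ι → ℝ} (hz : z ∈ K) :
    ‖V⁻¹ *ᵥ z‖ ≤ D / |V.det| := by
  have hD0 : 0 ≤ D := (abs_nonneg _).trans (hD V hV)
  refine (pi_norm_le_iff_of_nonneg (by positivity)).2 fun i => ?_
  have hcol : ∀ j, (V.updateCol i z).col j ∈ K := fun j => by
    rcases eq_or_ne j i with rfl | hj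
    · rwa [show (V.updateCol j z).col j = z by ext; simp]
    · rw [show (V.updateCol i z).col j = V.col j by ext; simp [hj]]
      exact hV j
  have hcramer : (V⁻¹ *ᵥ z) i = (V.updateCol i z).det / V.det := by
    rw [inv_def, Ring.inverse_eq_inv', smul_mulVec, ← cramer_eq_adjugate_mulVec, Pi.smul_apply,
      cramer_apply, smul_eq_mul, inv_mul_eq_div]
  rw [hcramer, Real.norm_eq_abs, abs_div]
  gcongr
  exact hD _ hcol

theorem col_smul_one_mem_closedBall {ρ : ℝ} (hρ : 0 ≤ ρ) (i : ι) :
    (ρ • (1 : Matrix ι ι ℝ)).col i ∈ closedBall 0 ρ := by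
  rw [mem_closedBall_zero_iff, pi_norm_le_iff_of_nonneg hρ]
  intro j
  rcases eq_or_ne j i with rfl | hj <;> simp [*, abs_of_nonneg]

theorem norm_le_of_abs_det_le {ρ : ℝ} (hρ : 0 < ρ) (hball : closedBall 0 ρ ⊆ K)
    (hD : ∀ W : Matrix ι ι ℝ, (∀ i, W.col i ∈ K) → |W.det| ≤ D) {z : ι → ℝ} (hz : z ∈ K) :
    ‖z‖ ≤ ρ * D / ρ ^ Fintype.card ι := by
  have hinv : (ρ • (1 : Matrix ι ι ℝ))⁻¹ = ρ⁻¹ • 1 := inv_eq_left_inv (by simp [hρ.ne'])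
  have hle := norm_inv_mulVec_le hD (fun i => hball (col_smul_one_mem_closedBall hρ.le i))
    (by simp [hρ.ne']) hz
  rw [hinv, smul_mulVec, one_mulVec, norm_smul, norm_inv, Real.norm_of_nonneg hρ.le,
    inv_mul_le_iff₀ hρ, det_smul, det_one, mul_one, abs_of_pos (by positivity)] at hle
  rwa [mul_div_assoc]

theorem exists_abs_det_le_two_mul (hD : ∀ W : Matrix ι ι ℝ, (∀ i, W.col i ∈ K) → |W.det| ≤ D)
    {U : Matrix ι ι ℝ} (hU : ∀ i, U.col i ∈ K) (hdet : U.det ≠ 0) :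
    ∃ V : Matrix ι ι ℝ, (∀ i, V.col i ∈ K) ∧ V.det ≠ 0 ∧
      ∀ W : Matrix ι ι ℝ, (∀ i, W.col i ∈ K) → |W.det| ≤ 2 * |V.det| := by
  set S : Set ℝ := (fun W : Matrix ι ι ℝ => |W.det|) '' {W | ∀ i, W.col i ∈ K}
  have hS : BddAbove S := ⟨D, by rintro _ ⟨W, hW, rfl⟩; exact hD W hW⟩
  have hUS : |U.det| ∈ S := ⟨U, hU, rfl⟩
  have hpos : 0 < sSup S := (abs_pos.2 hdet).trans_le (le_csSup hS hUS)
  obtain ⟨_, ⟨V, hV, rfl⟩, hlt⟩ := exists_lt_of_lt_csSup ⟨_, hUS⟩ (half_lt_self hpos)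
  refine ⟨V, hV, abs_pos.1 ((half_pos hpos).trans hlt), fun W hW => ?_⟩
  have hle : |W.det| ≤ sSup S := le_csSup hS ⟨W, hW, rfl⟩
  linarith

end Determinant

/-! ### Second derivatives -/

theorem deriv_deriv_nonpos_of_isLocalMax {k : ℝ → ℝ} {x : ℝ} (hk : ContinuousAt k x)
    (hmax : IsLocalMax k x) : deriv (deriv k) x ≤ 0 := by
  by_contra! hpos
  have hmin : IsLocalMin k x := isLocalMin_of_deriv_deriv_pos hpos hmax.deriv_eq_zero hk
  have hconst : k =ᶠ[𝓝 x] fun _ => k x := by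
    filter_upwards [hmin, hmax] with s h₁ h₂ using le_antisymm h₂ h₁
  have := hconst.deriv.deriv_eq
  simp only [deriv_const', deriv_const] at this
  exact hpos.ne' this

theorem deriv_deriv_le_of_eventually_le_quadratic {k : ℝ → ℝ} (hk : ContDiff ℝ 2 k) {β γ : ℝ}
    (hle : ∀ᶠ s in 𝓝 0, k s ≤ k 0 + β * s + γ * s ^ 2) : deriv (deriv k) 0 ≤ 2 * γ := by
  have hk1 : Differentiable ℝ k := hk.differentiable (by norm_num)
  have hk2 : Differentiable ℝ (deriv k) :=
    (hk.iterate_deriv' 1 1).differentiable (by norm_num)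
  have hmax : IsLocalMax (fun s => k s - β * s - γ * s ^ 2) 0 := by
    filter_upwards [hle] with s hs
    simp only [mul_zero, sub_zero, ne_eq, OfNat.ofNat_ne_zero, not_false_eq_true, zero_pow]
    linarith
  have hderiv : deriv (fun s => k s - β * s - γ * s ^ 2) =
      fun s => deriv k s - β - γ * (2 * s) := by
    ext s
    have := (((hk1 s).hasDerivAt.fun_sub ((hasDerivAt_id s).const_mul β)).fun_sub
      (((hasDerivAt_id s).fun_pow 2).const_mul γ)).deriv
    simpa using this
  have hderiv2 : deriv (fun s => deriv k s - β - γ * (2 * s)) 0 = deriv (deriv k) 0 - γ * 2 := by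
    have := (((hk2 0).hasDerivAt.sub_const β).fun_sub
      (((hasDerivAt_id (0 : ℝ)).const_mul 2).const_mul γ)).deriv
    simpa using this
  have := deriv_deriv_nonpos_of_isLocalMax (by have := hk.continuous; fun_prop) hmax
  rw [hderiv, hderiv2] at this
  linarith

theorem differentiable_fderiv_of_contDiff_two {E F : Type*} [NormedAddCommGroup E]
    [NormedSpace ℝ E] [NormedAddCommGroup F] [NormedSpace ℝ F] {f : E → F} (hf : ContDiff ℝ 2 f) :
    Differentiable ℝ (fderiv ℝ f) :=
  (hf.fderiv_right (m := 1) (by norm_num)).differentiable (by norm_num)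

theorem deriv_comp_line {E F : Type*} [NormedAddCommGroup E] [NormedSpace ℝ E]
    [NormedAddCommGroup F] [NormedSpace ℝ F] {f : E → F} (hf : Differentiable ℝ f) (x v : E) :
    deriv (fun s : ℝ => f (x + s • v)) = fun s => fderiv ℝ f (x + s • v) v := by
  ext s
  have hline : HasDerivAt (fun s : ℝ => x + s • v) v s := by
    simpa using ((hasDerivAt_id s).smul_const v).const_add x
  exact ((hf _).hasFDerivAt.comp_hasDerivAt s hline).deriv

theorem convexOn_comp_line {E : Type*} [AddCommGroup E] [Module ℝ E] {f : E → ℝ}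
    (hf : ConvexOn ℝ univ f) (x v : E) :
    ConvexOn ℝ univ fun s : ℝ => f (x + s • v) := by
  have := hf.comp_affineMap (AffineMap.lineMap x (x + v))
  simpa [Function.comp_def, AffineMap.lineMap_apply, add_comm] using this

section Hessian

variable {n : ℕ} {f : (Fin n → ℝ) → ℝ}

theorem hess_apply (hf : ContDiff ℝ 2 f) (x : Fin n → ℝ) (p q : Fin n) :
    hess f x p q = fderiv ℝ (fderiv ℝ f) x (Pi.single p 1) (Pi.single q 1) := by
  rw [hess, of_apply, fderiv_clm_apply (differentiable_fderiv_of_contDiff_two hf x) (by fun_prop)]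
  simp

theorem dotProduct_hess_mulVec (hf : ContDiff ℝ 2 f) (x u v : Fin n → ℝ) :
    u ⬝ᵥ hess f x *ᵥ v = fderiv ℝ (fderiv ℝ f) x u v := by
  conv_rhs => rw [pi_eq_sum_univ' u, pi_eq_sum_univ' v]
  simp only [map_sum, map_smul, _root_.sum_apply, _root_.smul_apply, ← hess_apply hf,
    dotProduct, mulVec, smul_eq_mul, Finset.mul_sum]
  rw [Finset.sum_comm]
  exact Finset.sum_congr rfl fun i _ => Finset.sum_congr rfl fun j _ => by ring

theorem isHermitian_hess (hf : ContDiff ℝ 2 f) (x : Fin n → ℝ) : (hess f x).IsHermitian := by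
  ext p q
  rw [conjTranspose_apply, star_trivial, hess_apply hf, hess_apply hf]
  exact (hf.contDiffAt.isSymmSndFDerivAt (by simp)).eq _ _

theorem hess_const_mul (hf : ContDiff ℝ 2 f) (t : ℝ) (x : Fin n → ℝ) :
    hess (fun y => t * f y) x = t • hess f x := by
  have hd : Differentiable ℝ f := hf.differentiable (by norm_num)
  have hfderiv : fderiv ℝ (fun y => t * f y) = t • fderiv ℝ f := by
    ext1 z
    exact fderiv_const_mul (hd z) t
  ext p q
  rw [hess_apply (contDiff_const.mul hf), Matrix.smul_apply, hess_apply hf, hfderiv,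
    fderiv_const_smul (differentiable_fderiv_of_contDiff_two hf x)]
  rfl

theorem hasDerivAt_fderiv_comp_line (hf : ContDiff ℝ 2 f) (x v : Fin n → ℝ) :
    HasDerivAt (fun s : ℝ => fderiv ℝ f (x + s • v) v) (v ⬝ᵥ hess f x *ᵥ v) 0 := by
  have hline : HasDerivAt (fun s : ℝ => x + s • v) v 0 := by
    simpa using ((hasDerivAt_id (0 : ℝ)).smul_const v).const_add x
  have hfderiv : HasFDerivAt (fderiv ℝ f) (fderiv ℝ (fderiv ℝ f) x) (x + (0 : ℝ) • v) := by
    simpa using (differentiable_fderiv_of_contDiff_two hf x).hasFDerivAt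
  have hcomp := hfderiv.comp_hasDerivAt (0 : ℝ) hline
  rw [dotProduct_hess_mulVec hf]
  simpa using hcomp.clm_apply (hasDerivAt_const (0 : ℝ) v)

theorem deriv_deriv_comp_line (hf : ContDiff ℝ 2 f) (x v : Fin n → ℝ) :
    deriv (deriv fun s : ℝ => f (x + s • v)) 0 = v ⬝ᵥ hess f x *ᵥ v := by
  rw [deriv_comp_line (hf.differentiable (by norm_num)) x v]
  exact (hasDerivAt_fderiv_comp_line hf x v).deriv

theorem posSemidef_hess_of_convexOn (hf : ContDiff ℝ 2 f) (hconv : ConvexOn ℝ univ f)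
    (x : Fin n → ℝ) : (hess f x).PosSemidef := by
  refine PosSemidef.of_dotProduct_mulVec_nonneg (isHermitian_hess hf x) fun v => ?_
  have hd : Differentiable ℝ f := hf.differentiable (by norm_num)
  have hmono := (convexOn_comp_line hconv x v).monotoneOn_deriv fun s _ => by fun_prop
  rw [star_trivial, ← deriv_deriv_comp_line hf]
  exact (monotoneOn_univ.1 hmono).deriv_nonneg

theorem hess_comp_affine (hf : ContDiff ℝ 2 f) (V : Matrix (Fin n) (Fin n) ℝ)
    (x₀ a : Fin n → ℝ) :
    hess (fun b => f (x₀ + V *ᵥ b)) a = Vᵀ * hess f (x₀ + V *ᵥ a) * V := by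
  set ℓ : (Fin n → ℝ) →L[ℝ] (Fin n → ℝ) := V.mulVecLin.toContinuousLinearMap
  have hℓ (b : Fin n → ℝ) : HasFDerivAt (fun b => x₀ + V *ᵥ b) ℓ b := ℓ.hasFDerivAt.const_add x₀
  have hfirst (q : Fin n) : (fun b => fderiv ℝ (fun b => f (x₀ + V *ᵥ b)) b (Pi.single q 1)) =
      fun b => fderiv ℝ f (x₀ + V *ᵥ b) (V.col q) := by
    ext b
    have hchain := (hf.differentiable (by norm_num) _).hasFDerivAt.comp b (hℓ b)
    rw [← mulVec_single_one]
    exact congrArg (fun ℓ' : (Fin n → ℝ) →L[ℝ] ℝ => ℓ' (Pi.single q 1)) hchain.fderiv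
  ext p q
  have hchain := ((differentiable_fderiv_of_contDiff_two hf (x₀ + V *ᵥ a)).hasFDerivAt.comp a
    (hℓ a)).clm_apply (hasFDerivAt_const (V.col q) a)
  have hsecond : fderiv ℝ (fun b => fderiv ℝ f (x₀ + V *ᵥ b) (V.col q)) a (Pi.single p 1) =
      fderiv ℝ (fderiv ℝ f) (x₀ + V *ᵥ a) (V.col p) (V.col q) := by
    rw [← mulVec_single_one V p]
    refine (congrArg (fun ℓ' : (Fin n → ℝ) →L[ℝ] ℝ => ℓ' (Pi.single p 1)) hchain.fderiv).trans ?_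
    simp [ℓ]
  rw [hess, of_apply, hfirst, hsecond, ← dotProduct_hess_mulVec hf, Matrix.mul_assoc,
    Matrix.mul_apply']
  rfl

end Hessian

/-! ### The Hessian determinant on a sublevel set -/

section HessianDeterminant

variable {n : ℕ}

theorem norm_sq_le_dotProduct_self {ι : Type*} [Fintype ι] (z : ι → ℝ) : ‖z‖ ^ 2 ≤ z ⬝ᵥ z := by
  rw [← Real.le_sqrt (norm_nonneg z) (by simpa using dotProduct_star_self_nonneg z)]
  refine (pi_norm_le_iff_of_nonneg (Real.sqrt_nonneg _)).2 fun i => ?_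
  rw [Real.norm_eq_abs]
  refine Real.abs_le_sqrt ?_
  rw [sq]
  exact Finset.single_le_sum (f := fun j => z j * z j) (fun j _ => mul_self_nonneg _)
    (Finset.mem_univ i)

theorem exists_isLocalMax_sub_quadratic {ι : Type*} [Fintype ι] {h : (ι → ℝ) → ℝ}
    (hh : Continuous h) {a₀ : ι → ℝ} {r ω μ : ℝ} (hr : 0 < r) (hμ : ω < μ * r ^ 2)
    (hle : ∀ a ∈ closedBall a₀ r, h a ≤ h a₀ + ω) :
    ∃ a ∈ closedBall a₀ r, IsLocalMax (fun b => h b - μ * ((b - a₀) ⬝ᵥ (b - a₀))) a := by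
  have ha₀ : a₀ ∈ closedBall a₀ r := mem_closedBall_self hr.le
  have hμ0 : 0 ≤ μ := by
    have : 0 < μ * r ^ 2 := by linarith [hle a₀ ha₀]
    exact (pos_of_mul_pos_left this (by positivity)).le
  have hcont : Continuous fun b => h b - μ * ((b - a₀) ⬝ᵥ (b - a₀)) := by fun_prop
  obtain ⟨a, ha, hmax⟩ := (isCompact_closedBall a₀ r).exists_isMaxOn ⟨a₀, ha₀⟩ hcont.continuousOn
  refine ⟨a, ha, hmax.isLocalMax (closedBall_mem_nhds_of_mem ?_)⟩
  by_contra hboundary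
  have hge : h a₀ ≤ h a - μ * ((a - a₀) ⬝ᵥ (a - a₀)) := by simpa using hmax ha₀
  have hr_le : r ≤ ‖a - a₀‖ := by simpa [dist_eq_norm] using hboundary
  have : μ * r ^ 2 ≤ μ * ((a - a₀) ⬝ᵥ (a - a₀)) :=
    mul_le_mul_of_nonneg_left ((pow_le_pow_left₀ hr.le hr_le 2).trans
      (norm_sq_le_dotProduct_self _)) hμ0
  linarith [hle a ha]

theorem dotProduct_hess_mulVec_le_of_isLocalMax {F : (Fin n → ℝ) → ℝ} (hF : ContDiff ℝ 2 F)
    (ℓ : (Fin n → ℝ) →L[ℝ] ℝ) {μ : ℝ} {a a₀ : Fin n → ℝ}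
    (hmax : IsLocalMax (fun b => F b + ℓ b - μ * ((b - a₀) ⬝ᵥ (b - a₀))) a) (u : Fin n → ℝ) :
    u ⬝ᵥ hess F a *ᵥ u ≤ 2 * μ * (u ⬝ᵥ u) := by
  rw [← deriv_deriv_comp_line hF, mul_assoc]
  refine deriv_deriv_le_of_eventually_le_quadratic (β := 2 * μ * ((a - a₀) ⬝ᵥ u) - ℓ u)
    (by fun_prop) ?_
  have hline : Tendsto (fun s : ℝ => a + s • u) (𝓝 0) (𝓝 a) := by
    have : ContinuousAt (fun s : ℝ => a + s • u) 0 := by fun_prop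
    simpa using this.tendsto
  filter_upwards [hline.eventually hmax] with s hs
  have hsq : (a + s • u - a₀) ⬝ᵥ (a + s • u - a₀) =
      (a - a₀) ⬝ᵥ (a - a₀) + 2 * s * ((a - a₀) ⬝ᵥ u) + s ^ 2 * (u ⬝ᵥ u) := by
    rw [add_sub_right_comm]
    simp only [add_dotProduct, dotProduct_add, smul_dotProduct, dotProduct_smul, smul_eq_mul,
      dotProduct_comm u (a - a₀)]
    ring
  rw [hsq, map_add, map_smul, smul_eq_mul] at hs
  rw [zero_smul, add_zero]
  linarith

theorem exists_det_hess_le_of_le_on_closedBall {F G : (Fin n → ℝ) → ℝ} (hF : ContDiff ℝ 2 F)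
    (hFc : ConvexOn ℝ univ F) (hG : ConvexOn ℝ univ G) {a₀ : Fin n → ℝ} {r ω : ℝ} (hr : 0 < r)
    (hω : 0 < ω) (hle : ∀ a ∈ closedBall a₀ r, F a + G a ≤ F a₀ + G a₀ + ω) :
    ∃ a ∈ closedBall a₀ r, (hess F a).det ≤ (4 * ω / r ^ 2) ^ n := by
  -- `G` need not be differentiable, so it is replaced by an almost supporting affine function.
  obtain ⟨ℓ, b, hminorant, hvalue⟩ :=
    exists_continuousLinearMap_add_le hG (x₀ := a₀) (sub_lt_self _ (half_pos hω))
  obtain ⟨a, ha, hmax⟩ := exists_isLocalMax_sub_quadratic (h := fun a => F a + ℓ a)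
    (ω := 3 / 2 * ω) (μ := 2 * ω / r ^ 2) (hF.continuous.add ℓ.continuous) hr
    (by field_simp; linarith) fun a ha => by linarith [hle a ha, hminorant a]
  refine ⟨a, ha, ?_⟩
  have hquad := dotProduct_hess_mulVec_le_of_isLocalMax hF ℓ hmax
  rw [show 2 * (2 * ω / r ^ 2) = 4 * ω / r ^ 2 by ring] at hquad
  simpa using det_le_pow_of_posSemidef (posSemidef_hess_of_convexOn hF hFc a) hquad

theorem add_mulVec_mem_sublevel {w : (Fin n → ℝ) → ℝ} (hw : ConvexOn ℝ univ w) {x₀ : Fin n → ℝ}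
    {s : ℝ} (hx₀ : w x₀ ≤ s) {V : Matrix (Fin n) (Fin n) ℝ} (hV : ∀ i, w (x₀ + V.col i) ≤ s)
    {a : Fin n → ℝ} (ha : 0 ≤ a) (hsum : ∑ i, a i ≤ 1) : w (x₀ + V *ᵥ a) ≤ s := by
  have hK : Convex ℝ ((fun z => x₀ + z) ⁻¹' {x | x ∈ univ ∧ w x ≤ s}) :=
    (hw.convex_le s).translate_preimage_right x₀
  exact (mulVec_mem_of_convex hK ⟨mem_univ _, by simpa using hx₀⟩ (fun i => ⟨mem_univ _, hV i⟩)
    ha hsum).2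

theorem exists_det_sq_mul_det_hess_le {f g : (Fin n → ℝ) → ℝ} (hf : ContDiff ℝ 2 f)
    (hfc : ConvexOn ℝ univ f) (hg : ConvexOn ℝ univ g) {x₀ : Fin n → ℝ}
    (hmin : ∀ x, f x₀ + g x₀ ≤ f x + g x) {V : Matrix (Fin n) (Fin n) ℝ}
    (hV : ∀ i, f (x₀ + V.col i) + g (x₀ + V.col i) ≤ f x₀ + g x₀ + 1) :
    ∃ x, f x + g x ≤ f x₀ + g x₀ + 1 ∧
      V.det ^ 2 * (hess f x).det ≤ (16 * (n + 1 : ℝ) ^ 2) ^ n := by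
  -- In the coordinates `a`, the sublevel set contains the cube `[0, 1 / (n + 1)]ⁿ`.
  set r : ℝ := 1 / (2 * (n + 1)) with hr_def
  have hr : 0 < r := by positivity
  have hcube : ∀ a ∈ closedBall (fun _ => r : Fin n → ℝ) r,
      f (x₀ + V *ᵥ a) + g (x₀ + V *ᵥ a) ≤ f x₀ + g x₀ + 1 := fun a ha => by
    have hcoord (i : Fin n) : 0 ≤ a i ∧ a i ≤ 2 * r := by
      have := (dist_le_pi_dist a _ i).trans (mem_closedBall.1 ha)
      rw [Real.dist_eq, abs_le] at this
      constructor <;> linarith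
    refine add_mulVec_mem_sublevel (hfc.add hg) (by simp) hV (fun i => (hcoord i).1) ?_
    calc ∑ i, a i ≤ ∑ _i : Fin n, 2 * r := Finset.sum_le_sum fun i _ => (hcoord i).2
      _ = n * (2 * r) := by simp
      _ ≤ 1 := by rw [hr_def]; field_simp; linarith
  have haffine {h : (Fin n → ℝ) → ℝ} (hh : ConvexOn ℝ univ h) :
      ConvexOn ℝ univ fun a => h (x₀ + V *ᵥ a) := by
    simpa [Function.comp_def] using (hh.translate_right x₀).comp_linearMap V.mulVecLin
  have hsmooth : ContDiff ℝ 2 fun a => f (x₀ + V *ᵥ a) :=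
    hf.comp (contDiff_const.add V.mulVecLin.toContinuousLinearMap.contDiff)
  obtain ⟨a, ha, hdet⟩ := exists_det_hess_le_of_le_on_closedBall hsmooth (haffine hfc) (haffine hg)
    hr one_pos fun a ha => by linarith [hcube a ha, hmin (x₀ + V *ᵥ fun _ => r)]
  refine ⟨x₀ + V *ᵥ a, hcube a ha, ?_⟩
  rw [hess_comp_affine hf, det_mul, det_mul, det_transpose] at hdet
  calc V.det ^ 2 * (hess f (x₀ + V *ᵥ a)).det
      = V.det * (hess f (x₀ + V *ᵥ a)).det * V.det := by ring
    _ ≤ (4 * 1 / r ^ 2) ^ n := hdet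
    _ = (16 * (n + 1 : ℝ) ^ 2) ^ n := by rw [hr_def]; congr 1; field_simp; norm_num

end HessianDeterminant

/-! ### Integrals -/

section Integral

variable {n : ℕ}

theorem hasFDerivAt_grad {φ : (Fin n → ℝ) → ℝ} (hφ : ContDiff ℝ 2 φ) (x : Fin n → ℝ) :
    HasFDerivAt (grad φ) ((hess φ x)ᵀ.mulVecLin.toContinuousLinearMap) x := by
  rw [hasFDerivAt_pi']
  intro q
  have hd : DifferentiableAt ℝ (fun z => fderiv ℝ φ z (Pi.single q 1)) x :=
    (differentiable_fderiv_of_contDiff_two hφ x).clm_apply (by fun_prop)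
  have hcoord : (ContinuousLinearMap.proj q).comp (hess φ x)ᵀ.mulVecLin.toContinuousLinearMap =
      fderiv ℝ (fun z => fderiv ℝ φ z (Pi.single q 1)) x := by
    apply ContinuousLinearMap.coe_injective
    refine LinearMap.pi_ext' fun p => ?_
    ext
    simp [hess]
  rw [hcoord]
  exact hd.hasFDerivAt

theorem lintegral_abs_det_hess {φ : (Fin n → ℝ) → ℝ} (hφ : ContDiff ℝ 2 φ)
    (hinj : Function.Injective (grad φ)) :
    ∫⁻ x, ENNReal.ofReal |(hess φ x).det| = volume (range (grad φ)) := by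
  have := lintegral_abs_det_fderiv_eq_addHaar_image volume MeasurableSet.univ
    (fun x _ => (hasFDerivAt_grad hφ x).hasFDerivWithinAt) hinj.injOn
  simpa [ContinuousLinearMap.det, image_univ, ← Matrix.toLin'_apply'] using this

theorem integrable_exp_neg_mul_norm {E : Type*} [NormedAddCommGroup E] [NormedSpace ℝ E]
    [FiniteDimensional ℝ E] [MeasurableSpace E] [BorelSpace E] (μ : Measure E)
    [μ.IsAddHaarMeasure] {b : ℝ} (hb : 0 < b) : Integrable (fun x => Real.exp (-b * ‖x‖)) μ := by
  cases subsingleton_or_nontrivial E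
  · simp [Subsingleton.elim _ (0 : E)]
  rw [integrable_fun_norm_addHaar μ (f := fun r => Real.exp (-b * r))]
  have hdim : (-1 : ℝ) < (Module.finrank ℝ E - 1 : ℕ) :=
    neg_one_lt_zero.trans_le (Nat.cast_nonneg _)
  simpa using integrableOn_rpow_mul_exp_neg_mul_rpow hdim one_pos hb

theorem lintegral_comp_inv_mulVec_sub {V : Matrix (Fin n) (Fin n) ℝ} (hV : V.det ≠ 0)
    (x₀ : Fin n → ℝ) {F : (Fin n → ℝ) → ENNReal} (hF : Measurable F) :
    ∫⁻ x, F (V⁻¹ *ᵥ (x - x₀)) = ENNReal.ofReal |V.det| * ∫⁻ a, F a := by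
  rw [lintegral_sub_right_eq_self (fun x => F (V⁻¹ *ᵥ x)) x₀]
  have hmap := Real.map_matrix_volume_pi_eq_smul_volume_pi (M := V⁻¹)
    (by rw [det_nonsing_inv]; simpa using hV)
  have hint := lintegral_map (μ := volume) hF
    (LinearMap.continuous_of_finiteDimensional (toLin' V⁻¹)).measurable
  rw [hmap, lintegral_smul_measure, det_nonsing_inv, Ring.inverse_eq_inv', inv_inv] at hint
  simpa using hint.symm

variable (n) in
/-- The integral of `e^(-‖a‖ / 2)` over `ℝⁿ`, for the supremum norm. In the coordinates of a
near-maximal frame it bounds the mass of `e^(-w)` from above. -/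
def expNormIntegral : ℝ := ∫ a : Fin n → ℝ, Real.exp (-(1 / 2) * ‖a‖)

theorem expNormIntegral_pos : 0 < expNormIntegral n :=
  integral_exp_pos (integrable_exp_neg_mul_norm volume (by norm_num))

theorem lintegral_exp_neg_norm_inv_mulVec_sub {V : Matrix (Fin n) (Fin n) ℝ} (hV : V.det ≠ 0)
    (x₀ : Fin n → ℝ) : ∫⁻ x, ENNReal.ofReal (Real.exp (-(1 / 2) * ‖V⁻¹ *ᵥ (x - x₀)‖)) =
      ENNReal.ofReal (|V.det| * expNormIntegral n) := by
  rw [lintegral_comp_inv_mulVec_sub hV x₀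
    (F := fun a => ENNReal.ofReal (Real.exp (-(1 / 2) * ‖a‖))) (by fun_prop), expNormIntegral,
    ← ofReal_integral_eq_lintegral_ofReal (integrable_exp_neg_mul_norm volume (by norm_num))
      (ae_of_all _ fun _ => (Real.exp_pos _).le), ENNReal.ofReal_mul (abs_nonneg _)]

end Integral

/-! ### Linear growth from a lower bound on the Monge–Ampère measure -/

section LinearGrowth

variable {n : ℕ}

theorem ofReal_exp_neg_mul_pow_le_lintegral {w : (Fin n → ℝ) → ℝ} {x₀ : Fin n → ℝ} {ρ s : ℝ}
    (hρ : 0 ≤ ρ) (hs : ∀ x ∈ closedBall x₀ ρ, w x ≤ s) :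
    ENNReal.ofReal (Real.exp (-s) * (2 * ρ) ^ n) ≤ ∫⁻ x, ENNReal.ofReal (Real.exp (-w x)) := by
  calc ENNReal.ofReal (Real.exp (-s) * (2 * ρ) ^ n)
      = ∫⁻ _x in closedBall x₀ ρ, ENNReal.ofReal (Real.exp (-s)) := by
        rw [setLIntegral_const, Real.volume_pi_closedBall _ hρ, Fintype.card_fin,
          ENNReal.ofReal_mul (Real.exp_pos _).le]
    _ ≤ ∫⁻ x in closedBall x₀ ρ, ENNReal.ofReal (Real.exp (-w x)) :=
        setLIntegral_mono' isClosed_closedBall.measurableSet fun x hx =>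
          ENNReal.ofReal_le_ofReal (Real.exp_le_exp.2 (neg_le_neg (hs x hx)))
    _ ≤ ∫⁻ x, ENNReal.ofReal (Real.exp (-w x)) := setLIntegral_le_lintegral _ _

theorem lintegral_exp_neg_le_of_frame {w : (Fin n → ℝ) → ℝ} (hw : ConvexOn ℝ univ w)
    {x₀ : Fin n → ℝ} (hmin : ∀ x, w x₀ ≤ w x) {V : Matrix (Fin n) (Fin n) ℝ} (hV : V.det ≠ 0)
    (hsub : ∀ x, w x ≤ w x₀ + 1 → ‖V⁻¹ *ᵥ (x - x₀)‖ ≤ 2) :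
    ∫⁻ x, ENNReal.ofReal (Real.exp (-w x)) ≤
      ENNReal.ofReal (Real.exp (1 - w x₀) * (|V.det| * expNormIntegral n)) := by
  have hgrowth := seminorm_sub_le_of_sublevel
    ((normSeminorm ℝ (Fin n → ℝ)).comp V⁻¹.mulVecLin) hw hmin hsub
  rw [ENNReal.ofReal_mul (Real.exp_pos _).le, ← lintegral_exp_neg_norm_inv_mulVec_sub hV x₀,
    ← lintegral_const_mul' _ _ ENNReal.ofReal_ne_top]
  refine lintegral_mono fun x => ?_
  rw [← ENNReal.ofReal_mul (Real.exp_pos _).le, ← Real.exp_add]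
  refine ENNReal.ofReal_le_ofReal (Real.exp_le_exp.2 ?_)
  have : ‖V⁻¹ *ᵥ (x - x₀)‖ ≤ 2 * (1 + (w x - w x₀)) := hgrowth x
  linarith

/-- An upper bound for the determinant of a near-maximal frame in the sublevel set `{w ≤ min w + 1}`
of a convex function `w = f + g` with `det D²f ≥ κ e^(-w)` and `∫ e^(-w) ≥ a`. -/
def frameDetBound (n : ℕ) (κ a : ℝ) : ℝ :=
  (16 * (n + 1 : ℝ) ^ 2) ^ n * Real.exp 2 * expNormIntegral n / (κ * a)

/-- An upper bound for the radius of the sublevel set `{w ≤ min w + 1}` about the minimum point,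
when it contains the ball of radius `ρ` and no frame in it has determinant above twice
`frameDetBound n κ a`. -/
def sublevelRadius (n : ℕ) (κ a ρ : ℝ) : ℝ :=
  ρ * (2 * frameDetBound n κ a) / ρ ^ n

theorem sublevelRadius_pos {κ a ρ : ℝ} (hκ : 0 < κ) (ha : 0 < a) (hρ : 0 < ρ) :
    0 < sublevelRadius n κ a ρ := by
  have := expNormIntegral_pos (n := n)
  unfold sublevelRadius frameDetBound
  positivity

variable {f g : (Fin n → ℝ) → ℝ} {x₀ : Fin n → ℝ} {κ : ℝ}

theorem det_sq_mul_exp_neg_le (hf : ContDiff ℝ 2 f) (hfc : ConvexOn ℝ univ f)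
    (hg : ConvexOn ℝ univ g) (hmin : ∀ x, f x₀ + g x₀ ≤ f x + g x) (hκ : 0 ≤ κ)
    (hdet : ∀ x, κ * Real.exp (-(f x + g x)) ≤ (hess f x).det) {V : Matrix (Fin n) (Fin n) ℝ}
    (hV : ∀ i, f (x₀ + V.col i) + g (x₀ + V.col i) ≤ f x₀ + g x₀ + 1) :
    V.det ^ 2 * (κ * Real.exp (-(f x₀ + g x₀ + 1))) ≤ (16 * (n + 1 : ℝ) ^ 2) ^ n := by
  obtain ⟨x, hx, hle⟩ := exists_det_sq_mul_det_hess_le hf hfc hg hmin hV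
  refine le_trans ?_ hle
  gcongr
  exact le_trans (by gcongr) (hdet x)

-- The mass bounds `e^m` by `|det V|` and the Monge–Ampère inequality bounds `|det V|²` by `e^m`.
theorem le_frameDetBound {m κ a δ : ℝ} (hκ : 0 < κ) (ha : 0 < a) (hδ : 0 < δ)
    (hmass : a ≤ Real.exp (1 - m) * (δ * expNormIntegral n))
    (hdet : δ ^ 2 * (κ * Real.exp (-(m + 1))) ≤ (16 * (n + 1 : ℝ) ^ 2) ^ n) :
    δ ≤ frameDetBound n κ a := by
  have hJ := expNormIntegral_pos (n := n)
  have hexp : Real.exp (1 - m) = Real.exp 2 * Real.exp (-(m + 1)) := by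
    rw [← Real.exp_add]; ring_nf
  rw [frameDetBound, le_div_iff₀ (by positivity)]
  calc δ * (κ * a) ≤ δ * (κ * (Real.exp (1 - m) * (δ * expNormIntegral n))) := by gcongr
    _ = δ ^ 2 * (κ * Real.exp (-(m + 1))) * Real.exp 2 * expNormIntegral n := by rw [hexp]; ring
    _ ≤ (16 * (n + 1 : ℝ) ^ 2) ^ n * Real.exp 2 * expNormIntegral n := by gcongr

theorem norm_sub_le_sublevelRadius (hf : ContDiff ℝ 2 f) (hfc : ConvexOn ℝ univ f)
    (hg : ConvexOn ℝ univ g) (hmin : ∀ x, f x₀ + g x₀ ≤ f x + g x) (hκ : 0 < κ)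
    (hdet : ∀ x, κ * Real.exp (-(f x + g x)) ≤ (hess f x).det) {a : ℝ} (ha : 0 < a)
    (hmass : ENNReal.ofReal a ≤ ∫⁻ x, ENNReal.ofReal (Real.exp (-(f x + g x)))) {ρ : ℝ}
    (hρ : 0 < ρ) (hball : ∀ x ∈ closedBall x₀ ρ, f x + g x ≤ f x₀ + g x₀ + 1) (x : Fin n → ℝ)
    (hx : f x + g x ≤ f x₀ + g x₀ + 1) : ‖x - x₀‖ ≤ sublevelRadius n κ a ρ := by
  set K : Set (Fin n → ℝ) := {z | f (x₀ + z) + g (x₀ + z) ≤ f x₀ + g x₀ + 1}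
  have hK {x : Fin n → ℝ} (hx : f x + g x ≤ f x₀ + g x₀ + 1) : x - x₀ ∈ K := by simpa [K] using hx
  have hballK : closedBall 0 ρ ⊆ K := fun z hz => hball _ (by simpa using hz)
  have hframe {W : Matrix (Fin n) (Fin n) ℝ} (hW : ∀ i, W.col i ∈ K) :=
    det_sq_mul_exp_neg_le hf hfc hg hmin hκ.le hdet hW
  obtain ⟨V, hVK, hV, hVmax⟩ := exists_abs_det_le_two_mul
    (fun W hW => Real.abs_le_sqrt ((le_div_iff₀ (by positivity)).2 (hframe hW)))
    (fun i => hballK (col_smul_one_mem_closedBall hρ.le i)) (by simp [hρ.ne'])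
  have hVpos : 0 < |V.det| := abs_pos.2 hV
  have hcoord (x : Fin n → ℝ) (hx : f x + g x ≤ f x₀ + g x₀ + 1) : ‖V⁻¹ *ᵥ (x - x₀)‖ ≤ 2 := by
    simpa [hVpos.ne'] using norm_inv_mulVec_le hVmax hVK hV (hK hx)
  have hJ := expNormIntegral_pos (n := n)
  have hmassV := hmass.trans (lintegral_exp_neg_le_of_frame (hfc.add hg) hmin hV hcoord)
  rw [ENNReal.ofReal_le_ofReal_iff (by positivity)] at hmassV
  have hVD : |V.det| ≤ frameDetBound n κ a :=
    le_frameDetBound hκ ha hVpos hmassV (by simpa using hframe hVK)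
  calc ‖x - x₀‖ ≤ ρ * (2 * |V.det|) / ρ ^ n := by
        simpa using norm_le_of_abs_det_le hρ hballK hVmax (hK hx)
    _ ≤ sublevelRadius n κ a ρ := by unfold sublevelRadius; gcongr

theorem eucNorm_le_mul_norm (z : Fin n → ℝ) : eucNorm z ≤ n * ‖z‖ := by
  rw [eucNorm, Real.sqrt_le_left (by positivity)]
  calc ∑ j, z j ^ 2 ≤ ∑ _j : Fin n, ‖z‖ ^ 2 := Finset.sum_le_sum fun j _ =>
        sq_le_sq.2 (by simpa using norm_le_pi_norm z j)
    _ = n * ‖z‖ ^ 2 := by simp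
    _ ≤ n ^ 2 * ‖z‖ ^ 2 := by
        gcongr
        exact_mod_cast Nat.le_self_pow two_ne_zero n
    _ = (n * ‖z‖) ^ 2 := (mul_pow _ _ _).symm

theorem exists_linear_growth_of_le_det_hess (n : ℕ) {κ a : ℝ} (hκ : 0 < κ) (ha : 0 < a) (b : ℝ)
    (L : NNReal) : ∃ ε > 0, ∃ C > 0, ∀ (f g : (Fin n → ℝ) → ℝ) (x₀ : Fin n → ℝ),
      ContDiff ℝ 2 f → ConvexOn ℝ univ f → ConvexOn ℝ univ g →
      LipschitzWith L (fun x => f x + g x) →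
      (∀ x, κ * Real.exp (-(f x + g x)) ≤ (hess f x).det) →
      ENNReal.ofReal a ≤ ∫⁻ x, ENNReal.ofReal (Real.exp (-(f x + g x))) →
      ∫⁻ x, ENNReal.ofReal (Real.exp (-(f x + g x))) ≤ ENNReal.ofReal b →
      (∀ x, f x₀ + g x₀ ≤ f x + g x) → ∀ x, ε * eucNorm (x - x₀) - C ≤ f x + g x := by
  set ρ : ℝ := 1 / (L + 1) with hρ_def
  have hρ : 0 < ρ := by positivity
  set r := sublevelRadius n κ a ρ
  have hr : 0 < r := sublevelRadius_pos hκ ha hρ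
  refine ⟨1 / (r * (n + 1)), by positivity, 2 + |Real.log (b / (2 * ρ) ^ n)|, by positivity, ?_⟩
  intro f g x₀ hf hfc hg hlip hdet hmass hmass' hmin x
  have hball (x) (hx : x ∈ closedBall x₀ ρ) : f x + g x ≤ f x₀ + g x₀ + 1 := by
    have hLρ : L * dist x x₀ ≤ 1 := calc
      L * dist x x₀ ≤ L * ρ := by gcongr; exact hx
      _ ≤ 1 := by rw [hρ_def]; field_simp; linarith
    linarith [hlip.le_add_mul x x₀]
  have hlow : Real.exp (-(f x₀ + g x₀ + 1)) * (2 * ρ) ^ n ≤ b := by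
    have := (ofReal_exp_neg_mul_pow_le_lintegral hρ.le hball).trans hmass'
    exact (ENNReal.ofReal_le_ofReal_iff'.1 this).resolve_right (by push Not; positivity)
  rw [← le_div_iff₀ (by positivity)] at hlow
  have hlog := (Real.le_log_iff_exp_le ((Real.exp_pos _).trans_le hlow)).2 hlow
  have hgrowth := seminorm_sub_le_of_sublevel (normSeminorm ℝ (Fin n → ℝ)) (hfc.add hg) hmin
    (norm_sub_le_sublevelRadius hf hfc hg hmin hκ hdet ha hmass hρ hball) x
  have heuc : 1 / (r * (n + 1)) * eucNorm (x - x₀) ≤ 1 + (f x + g x - (f x₀ + g x₀)) := by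
    rw [one_div, inv_mul_le_iff₀ (by positivity)]
    calc eucNorm (x - x₀) ≤ n * ‖x - x₀‖ := eucNorm_le_mul_norm _
      _ ≤ (n + 1) * (r * (1 + (f x + g x - (f x₀ + g x₀)))) := by
        gcongr
        exacts [by linarith, hgrowth]
      _ = _ := by ring
  linarith [le_abs_self (Real.log (b / (2 * ρ) ^ n))]

end LinearGrowth

/-! ### Legendre transforms and the dual polytope -/

section Legendre

variable {n : ℕ}

theorem abs_dotp_le (x y : Fin n → ℝ) : |dotp x y| ≤ n * ‖x‖ * ‖y‖ := by
  calc |dotp x y| ≤ ∑ j, |x j * y j| := Finset.abs_sum_le_sum_abs _ _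
    _ ≤ ∑ _j : Fin n, ‖x‖ * ‖y‖ := Finset.sum_le_sum fun j _ => by
        rw [abs_mul]
        exact mul_le_mul (norm_le_pi_norm x j) (norm_le_pi_norm y j) (abs_nonneg _) (norm_nonneg _)
    _ = n * ‖x‖ * ‖y‖ := by simp [mul_assoc]

theorem fderiv_apply_eq_dotp_grad (f : (Fin n → ℝ) → ℝ) (x z : Fin n → ℝ) :
    fderiv ℝ f x z = dotp z (grad f x) := by
  conv_lhs => rw [pi_eq_sum_univ' z]
  simp only [map_sum, map_smul, dotp, grad, smul_eq_mul]

theorem lipschitzWith_of_norm_grad_le {f : (Fin n → ℝ) → ℝ} (hf : Differentiable ℝ f) {R : NNReal}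
    (hR : ∀ x, ‖grad f x‖ ≤ R) : LipschitzWith (n * R) f := by
  refine lipschitzWith_of_nnnorm_fderiv_le hf fun x => ?_
  rw [← NNReal.coe_le_coe, coe_nnnorm]
  refine ContinuousLinearMap.opNorm_le_bound _ (NNReal.coe_nonneg _) fun z => ?_
  rw [fderiv_apply_eq_dotp_grad, Real.norm_eq_abs]
  calc |dotp z (grad f x)| ≤ n * ‖z‖ * ‖grad f x‖ := abs_dotp_le z _
    _ ≤ n * ‖z‖ * R := by gcongr; exact hR x
    _ = (n * R : NNReal) * ‖z‖ := by push_cast; ring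

/-- The Legendre transform of `u` over `Ω`, of which `phi0` is an instance. It is meaningful only
when the supremum is finite, for instance when `Ω` is bounded and `u` is bounded below on it. -/
def legendre (Ω : Set (Fin n → ℝ)) (u : (Fin n → ℝ) → ℝ) (x : Fin n → ℝ) : ℝ :=
  sSup ((fun y => dotp x y - u y) '' Ω)

variable {Ω : Set (Fin n → ℝ)} {u : (Fin n → ℝ) → ℝ}

theorem exists_nnreal_forall_norm_le {E : Type*} [SeminormedAddCommGroup E] {s : Set E}
    (hs : Bornology.IsBounded s) : ∃ R : NNReal, ∀ y ∈ s, ‖y‖ ≤ R := by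
  obtain ⟨R, hR, hle⟩ := hs.exists_pos_norm_le
  exact ⟨⟨R, hR.le⟩, hle⟩

theorem dotp_sub_le_legendre (hΩ : Bornology.IsBounded Ω) (hu : BddBelow (u '' Ω))
    (x : Fin n → ℝ) {y : Fin n → ℝ} (hy : y ∈ Ω) : dotp x y - u y ≤ legendre Ω u x := by
  obtain ⟨R, hR⟩ := exists_nnreal_forall_norm_le hΩ
  obtain ⟨b, hb⟩ := hu
  refine le_csSup ⟨n * ‖x‖ * R - b, ?_⟩ (mem_image_of_mem _ hy)
  rintro _ ⟨z, hz, rfl⟩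
  have hdotp : dotp x z ≤ n * ‖x‖ * R :=
    (le_abs_self _).trans ((abs_dotp_le x z).trans (by gcongr; exact hR z hz))
  exact sub_le_sub hdotp (hb (mem_image_of_mem u hz))

theorem convexOn_legendre (hΩ : Bornology.IsBounded Ω) (hne : Ω.Nonempty)
    (hu : BddBelow (u '' Ω)) : ConvexOn ℝ univ (legendre Ω u) := by
  refine ⟨convex_univ, fun x _ z _ s t hs ht hst => csSup_le (hne.image _) ?_⟩
  rintro _ ⟨y, hy, rfl⟩
  calc dotp (s • x + t • z) y - u y = s * (dotp x y - u y) + t * (dotp z y - u y) := by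
        have hdotp : dotp (s • x + t • z) y = s * dotp x y + t * dotp z y := by
          simp [dotp, add_mul, mul_assoc, Finset.sum_add_distrib, Finset.mul_sum]
        linear_combination hdotp + u y * hst
    _ ≤ s * legendre Ω u x + t * legendre Ω u z := by
        gcongr <;> exact dotp_sub_le_legendre hΩ hu _ hy

theorem exists_lipschitzWith_legendre (hΩ : Bornology.IsBounded Ω) (hne : Ω.Nonempty)
    (hu : BddBelow (u '' Ω)) : ∃ L, LipschitzWith L (legendre Ω u) := by
  obtain ⟨R, hR⟩ := exists_nnreal_forall_norm_le hΩ
  refine ⟨n * R, LipschitzWith.of_le_add_mul _ fun x z => csSup_le (hne.image _) ?_⟩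
  rintro _ ⟨y, hy, rfl⟩
  have hdotp : dotp x y = dotp z y + dotp (x - z) y := by
    simp [dotp, sub_mul]
  have hdiff : dotp (x - z) y ≤ n * ‖x - z‖ * R :=
    (le_abs_self _).trans ((abs_dotp_le _ y).trans (by gcongr; exact hR y hy))
  rw [dist_eq_norm, NNReal.coe_mul, NNReal.coe_natCast]
  linarith [dotp_sub_le_legendre hΩ hu z hy]

end Legendre

section Polytope

variable {n d : ℕ} (N : Fin d → Fin n → ℤ)

theorem zero_mem_interior_Pset : 0 ∈ interior (Pset N) := by
  have hopen : IsOpen {y : Fin n → ℝ | ∀ i, -1 < ∑ j, y j * (N i j : ℝ)} := by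
    rw [Set.ofPred_forall]
    exact isOpen_iInter_of_finite fun i => isOpen_lt continuous_const (by fun_prop)
  exact interior_maximal (fun y hy i => (hy i).le) hopen fun i => by simp

theorem bddBelow_u0_image : BddBelow (u0 N '' interior (Pset N)) := by
  refine ⟨-d, ?_⟩
  rintro _ ⟨y, hy, rfl⟩
  calc (-d : ℝ) = ∑ _i : Fin d, (-1 : ℝ) := by simp
    _ ≤ u0 N y := Finset.sum_le_sum fun i _ => by
        have hl : 0 ≤ lfun N i y := by linarith [interior_subset hy i, lfun.eq_1 N i y]
        linarith [Real.self_sub_one_le_mul_log hl]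

variable {N}

theorem neg_one_le_dotp_of_mem_convexHull {y z : Fin n → ℝ} (hy : y ∈ Pset N)
    (hz : z ∈ convexHull ℝ (range fun i => fun j => (N i j : ℝ))) : -1 ≤ dotp y z := by
  have hconv : Convex ℝ {z : Fin n → ℝ | -1 ≤ dotp y z} :=
    convex_halfSpace_ge (LinearMap.isLinear (dotProductBilin ℝ ℝ y)) (-1)
  have hsub : (range fun i => fun j => (N i j : ℝ)) ⊆ {z | -1 ≤ dotp y z} := range_subset_iff.2 hy
  exact convexHull_min hsub hconv hz

-- Polarity: a ball of radius `δ` inside the hull puts `P` inside the ball of radius `1 / δ`.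
theorem isBounded_Pset
    (hQ : (0 : Fin n → ℝ) ∈ interior (convexHull ℝ (range fun i => fun j => (N i j : ℝ)))) :
    Bornology.IsBounded (Pset N) := by
  obtain ⟨δ, hδ, hball⟩ := nhds_basis_closedBall.mem_iff.1 (mem_interior_iff_mem_nhds.1 hQ)
  refine isBounded_iff_forall_norm_le.2 ⟨1 / δ, fun y hy => ?_⟩
  refine (pi_norm_le_iff_of_nonneg (by positivity)).2 fun j => ?_
  have hcoord {s : ℝ} (hs : |s| = δ) : -1 ≤ y j * s := by
    have hmem : Pi.single j s ∈ closedBall (0 : Fin n → ℝ) δ := by simp [Pi.norm_single, hs]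
    simpa [dotp, Pi.single_apply] using neg_one_le_dotp_of_mem_convexHull hy (hball hmem)
  have hpos := hcoord (abs_of_pos hδ)
  have hneg := hcoord (by rw [abs_neg, abs_of_pos hδ] : |-δ| = δ)
  rw [Real.norm_eq_abs, abs_le, ← neg_div, div_le_iff₀ hδ, le_div_iff₀ hδ]
  constructor <;> linarith

theorem convexOn_phi0 (hP : Bornology.IsBounded (Pset N)) : ConvexOn ℝ univ (phi0 N) :=
  convexOn_legendre (hP.subset interior_subset) ⟨0, zero_mem_interior_Pset N⟩ (bddBelow_u0_image N)

theorem exists_lipschitzWith_phi0 (hP : Bornology.IsBounded (Pset N)) :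
    ∃ L, LipschitzWith L (phi0 N) :=
  exists_lipschitzWith_legendre (hP.subset interior_subset) ⟨0, zero_mem_interior_Pset N⟩
    (bddBelow_u0_image N)

theorem volume_interior_Pset_ne_zero : volume (interior (Pset N)) ≠ 0 :=
  (isOpen_interior.measure_pos volume ⟨0, zero_mem_interior_Pset N⟩).ne'

end Polytope

/-! ### The continuity-method equation -/

theorem lipschitzWith_mul_add_one_sub_mul {E : Type*} [PseudoMetricSpace E] {φ ψ : E → ℝ}
    {K L : NNReal} (hφ : LipschitzWith K φ) (hψ : LipschitzWith L ψ) {t : ℝ}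
    (ht : t ∈ Icc (0 : ℝ) 1) : LipschitzWith (max K L) fun x => t * φ x + (1 - t) * ψ x := by
  refine LipschitzWith.of_le_add_mul _ fun x y => ?_
  have hφt := mul_le_mul_of_nonneg_left
    ((hφ.weaken (le_max_left K L)).le_add_mul x y) ht.1
  have hψt := mul_le_mul_of_nonneg_left
    ((hψ.weaken (le_max_right K L)).le_add_mul x y) (sub_nonneg.2 ht.2)
  linarith

section MongeAmpere

variable {n : ℕ} {φ w : (Fin n → ℝ) → ℝ} {c : Fin n → ℝ} {c₀ β : ℝ}

theorem le_det_hess_const_mul (hφ : ContDiff ℝ 2 φ)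
    (heq : ∀ x, (hess φ x).det = Real.exp (-c₀ - w x - dotp c (grad φ x)))
    (hβ : ∀ x, |dotp c (grad φ x)| ≤ β) {ε₀ t : ℝ} (hε₀ : 0 ≤ ε₀) (ht : ε₀ ≤ t) (x : Fin n → ℝ) :
    ε₀ ^ n * Real.exp (-c₀ - β) * Real.exp (-w x) ≤ (hess (fun y => t * φ y) x).det := by
  rw [hess_const_mul hφ, det_smul, Fintype.card_fin, heq, mul_assoc, ← Real.exp_add]
  have : 0 ≤ t := hε₀.trans ht
  gcongr
  linarith [le_of_abs_le (hβ x)]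

theorem ofReal_mul_volume_le_lintegral_exp_neg (hφ : ContDiff ℝ 2 φ)
    (hinj : Function.Injective (grad φ))
    (heq : ∀ x, (hess φ x).det = Real.exp (-c₀ - w x - dotp c (grad φ x)))
    (hβ : ∀ x, |dotp c (grad φ x)| ≤ β) :
    ENNReal.ofReal (Real.exp (c₀ - β)) * volume (range (grad φ)) ≤
      ∫⁻ x, ENNReal.ofReal (Real.exp (-w x)) := by
  rw [← lintegral_abs_det_hess hφ hinj, ← lintegral_const_mul' _ _ ENNReal.ofReal_ne_top]
  refine lintegral_mono fun x => ?_
  rw [← ENNReal.ofReal_mul (Real.exp_pos _).le, heq, Real.abs_exp, ← Real.exp_add]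
  gcongr
  linarith [neg_le_of_abs_le (hβ x)]

theorem lintegral_exp_neg_le_ofReal_mul_volume (hφ : ContDiff ℝ 2 φ)
    (hinj : Function.Injective (grad φ))
    (heq : ∀ x, (hess φ x).det = Real.exp (-c₀ - w x - dotp c (grad φ x)))
    (hβ : ∀ x, |dotp c (grad φ x)| ≤ β) :
    ∫⁻ x, ENNReal.ofReal (Real.exp (-w x)) ≤
      ENNReal.ofReal (Real.exp (c₀ + β)) * volume (range (grad φ)) := by
  rw [← lintegral_abs_det_hess hφ hinj, ← lintegral_const_mul' _ _ ENNReal.ofReal_ne_top]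
  refine lintegral_mono fun x => ?_
  rw [← ENNReal.ofReal_mul (Real.exp_pos _).le, heq, Real.abs_exp, ← Real.exp_add]
  gcongr
  linarith [le_of_abs_le (hβ x)]

theorem w_linear_growth_general {Ω : Set (Fin n → ℝ)} (hΩ : Bornology.IsBounded Ω)
    (hvol : volume Ω ≠ 0) {ψ : (Fin n → ℝ) → ℝ} (hψ : ConvexOn ℝ univ ψ) {L : NNReal}
    (hψL : LipschitzWith L ψ) (c : Fin n → ℝ) (c₀ : ℝ) {ε₀ : ℝ} (hε₀ : 0 < ε₀) :
    ∃ ε > 0, ∃ C > 0, ∀ t ∈ Icc ε₀ 1, ∀ φ : (Fin n → ℝ) → ℝ, ContDiff ℝ 2 φ →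
      ConvexOn ℝ univ φ → BijOn (grad φ) univ Ω →
      (∀ x, (hess φ x).det =
        Real.exp (-c₀ - (t * φ x + (1 - t) * ψ x) - dotp c (grad φ x))) →
      ∀ xt, (∀ x, t * φ xt + (1 - t) * ψ xt ≤ t * φ x + (1 - t) * ψ x) →
        ∀ x, ε * eucNorm (x - xt) - C ≤ t * φ x + (1 - t) * ψ x := by
  obtain ⟨R, hR⟩ := exists_nnreal_forall_norm_le hΩ
  have hfin : volume Ω ≠ ⊤ := hΩ.measure_lt_top.ne
  have hvol_pos : 0 < (volume Ω).toReal := ENNReal.toReal_pos hvol hfin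
  set β : ℝ := n * ‖c‖ * R
  obtain ⟨ε, hε, C, hC, hgrowth⟩ := exists_linear_growth_of_le_det_hess n
    (κ := ε₀ ^ n * Real.exp (-c₀ - β)) (a := Real.exp (c₀ - β) * (volume Ω).toReal)
    (by positivity) (by positivity) (Real.exp (c₀ + β) * (volume Ω).toReal) (max (n * R) L)
  refine ⟨ε, hε, C, hC, fun t ht φ hφ hφc hbij heq xt hmin => ?_⟩
  have ht0 : 0 ≤ t := hε₀.le.trans ht.1
  have hinj : Function.Injective (grad φ) := injOn_univ.1 hbij.injOn
  have hrange : range (grad φ) = Ω := image_univ ▸ hbij.image_eq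
  have hgrad (x) : ‖grad φ x‖ ≤ R := hR _ (hbij.mapsTo (mem_univ x))
  have hβ (x) : |dotp c (grad φ x)| ≤ β :=
    (abs_dotp_le _ _).trans (mul_le_mul_of_nonneg_left (hgrad x) (by positivity))
  refine hgrowth _ _ xt (contDiff_const.mul hφ) (hφc.smul ht0) (hψ.smul (sub_nonneg.2 ht.2))
    (lipschitzWith_mul_add_one_sub_mul (lipschitzWith_of_norm_grad_le
      (hφ.differentiable two_ne_zero) hgrad) hψL ⟨ht0, ht.2⟩)
    (le_det_hess_const_mul hφ heq hβ hε₀.le ht.1) ?_ ?_ hmin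
  · rw [ENNReal.ofReal_mul (Real.exp_pos _).le, ENNReal.ofReal_toReal hfin, ← hrange]
    exact ofReal_mul_volume_le_lintegral_exp_neg hφ hinj heq hβ
  · rw [ENNReal.ofReal_mul (Real.exp_pos _).le, ENNReal.ofReal_toReal hfin, ← hrange]
    exact lintegral_exp_neg_le_ofReal_mul_volume hφ hinj heq hβ

end MongeAmpere

/-- Uniform coercivity: `w_t(x) ≥ ε|x - x^t| - C` for all `x`, uniformly over
`t ∈ [ε₀,1]` and over solutions at parameter `t`, where `x^t` is the minimum point of
`w_t`. Here `c` is the unique vector with `∫_P yᵢ e^{⟨c,y⟩} dy = 0` for all `i`. -/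
theorem w_linear_growth {n d : ℕ} (hn : 1 ≤ n) (N : Fin d → Fin n → ℤ)
    (hQ : (0 : Fin n → ℝ) ∈ interior (convexHull ℝ (Set.range fun i => fun j => (N i j : ℝ))))
    (c : Fin n → ℝ) (hc : ∀ i, ∫ y in Pset N, y i * Real.exp (dotp c y) = 0)
    (c₀ : ℝ) (ε₀ : ℝ) (hε₀ : ε₀ ∈ Set.Ioc (0 : ℝ) 1) :
    ∃ ε > 0, ∃ C > 0, ∀ t ∈ Set.Icc ε₀ 1, ∀ φ : (Fin n → ℝ) → ℝ, IsSolution N c c₀ t φ →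
      ∀ xt : Fin n → ℝ, (∀ x, wfun N t φ xt ≤ wfun N t φ x) →
        ∀ x : Fin n → ℝ, ε * eucNorm (x - xt) - C ≤ wfun N t φ x := by
  have hP := isBounded_Pset hQ
  obtain ⟨L, hL⟩ := exists_lipschitzWith_phi0 hP
  obtain ⟨ε, hε, C, hC, hgrowth⟩ := w_linear_growth_general (hP.subset interior_subset)
    volume_interior_Pset_ne_zero (convexOn_phi0 hP) hL c c₀ hε₀.1
  exact ⟨ε, hε, C, hC, fun t ht φ ⟨hsmooth, hφ, hbij, _, heq⟩ =>
    hgrowth t ht φ (contDiff_infty.1 hsmooth 2) hφ.convexOn hbij heq⟩
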